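/- arXiv:1805.05150 — 2 statements merged into one kernel-verified Lean document; each statement's English description precedes it below -/
import Mathlib

section
/- Let v : ℝ² → ℝ² be Lipschitz and ℤ²-periodic, and let M be any 2×2 real matrix. Then ∫_{[0,1)²} det(M + Dv(x)) dx = det(M); in particular, if det(M) = 0 then ∫_{[0,1)²} det(M + Dv(x)) dx = 0. -/
open MeasureTheory

/-- The determinant of a 2×2 real matrix. -/
def det2 (A : Matrix (Fin 2) (Fin 2) ℝ) : ℝ := A 0 0 * A 1 1 - A 0 1 * A 1 0

/-- The Jacobian matrix of a map `v : ℝ² → ℝ²` at `x`: `(jac v x) i j = ∂ⱼ vⁱ (x)`.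
(For a Lipschitz map this coincides a.e. with the total derivative, by Rademacher.) -/
noncomputable def jac (v : (Fin 2 → ℝ) → (Fin 2 → ℝ)) (x : Fin 2 → ℝ) :
    Matrix (Fin 2) (Fin 2) ℝ :=
  Matrix.of fun i j => fderiv ℝ v x (Pi.single j 1) i

/-- `ℤ²`-periodicity of a map `ℝ² → ℝ²`. -/
def ZsqPeriodic (v : (Fin 2 → ℝ) → (Fin 2 → ℝ)) : Prop :=
  ∀ (x : Fin 2 → ℝ) (z : Fin 2 → ℤ), v (x + fun i => (z i : ℝ)) = v x

/-- The unit cell `[0,1)²`. -/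
def unitCell : Set (Fin 2 → ℝ) := Set.univ.pi fun _ => Set.Ico (0 : ℝ) 1

/-!
The determinant is a null Lagrangian. Expanding `det (M + Dv)`, the terms linear in `Dv` have mean
zero because `v` is periodic, and `det Dv` has mean zero because
`∫ ∂ₐf ∂_b g = ∫ ∂_b f ∂ₐg` for periodic Lipschitz `f`, `g`. Second derivatives need not exist, so
the last identity is obtained from an exact one for finite differences: `Δ_[a]` and `Δ_[-a]` are
adjoint under the integral over a period, hence `∫ Δ_[a] f * Δ_[b] g = ∫ Δ_[-b] f * Δ_[-a] g`. By
Rademacher's theorem and dominated convergence it survives the passage to the limit, where the two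
signs cancel.
-/

open Bornology Filter Topology
open scoped fwdDiff NNReal ENNReal Pointwise

theorem fwdDiff_fwdDiff_comm {A B : Type*} [AddCommMonoid A] [AddCommGroup B] (a b : A)
    (f : A → B) : Δ_[a] (Δ_[b] f) = Δ_[b] (Δ_[a] f) := by
  funext x
  simp only [fwdDiff, add_right_comm x b a]
  abel

theorem continuous_fwdDiff {A B : Type*} [AddCommMonoid A] [TopologicalSpace A] [ContinuousAdd A]
    [AddCommGroup B] [TopologicalSpace B] [IsTopologicalAddGroup B] {f : A → B}
    (hf : Continuous f) (a : A) : Continuous (Δ_[a] f) := by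
  unfold fwdDiff
  fun_prop

theorem periodic_fwdDiff {A B : Type*} [AddCommMonoid A] [AddCommGroup B] {f : A → B} {c : A}
    (hf : f.Periodic c) (a : A) : (Δ_[a] f).Periodic c :=
  (hf.add_const a).sub hf

theorem integrableOn_of_continuous_of_isBounded {X F : Type*} [MetricSpace X] [ProperSpace X]
    [MeasurableSpace X] [OpensMeasurableSpace X] {μ : Measure X} [IsFiniteMeasureOnCompacts μ]
    [NormedAddCommGroup F] {s : Set X} (hs : IsBounded s) {f : X → F} (hf : Continuous f) :
    IntegrableOn f s μ :=
  (hf.continuousOn.integrableOn_compact hs.isCompact_closure).mono_set subset_closure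

section Lipschitz

variable {E : Type*} [NormedAddCommGroup E] [NormedSpace ℝ E]

theorem norm_inv_smul_fwdDiff_le_of_lipschitz {F : Type*} [NormedAddCommGroup F] [NormedSpace ℝ F]
    {f : E → F} {K : ℝ≥0} (hf : LipschitzWith K f) (a : E) (t : ℝ) (x : E) :
    ‖t⁻¹ • Δ_[t • a] f x‖ ≤ K * ‖a‖ := by
  rcases eq_or_ne t 0 with rfl | ht
  · simpa using by positivity
  calc ‖t⁻¹ • Δ_[t • a] f x‖ = ‖t‖⁻¹ * ‖f (x + t • a) - f x‖ := by
        rw [norm_smul, norm_inv, fwdDiff]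
    _ ≤ ‖t‖⁻¹ * (K * ‖t • a‖) := by
        gcongr
        simpa using hf.norm_sub_le (x + t • a) x
    _ = K * ‖a‖ := by
        rw [norm_smul]
        field_simp

variable [MeasurableSpace E] [BorelSpace E] {μ : Measure E} {s : Set E} {f g : E → ℝ} {K L : ℝ≥0}

theorem integrableOn_lineDeriv_of_lipschitz (hs : μ s ≠ ∞) (hf : LipschitzWith K f) (a : E) :
    IntegrableOn (fun x ↦ lineDeriv ℝ f x a) s μ :=
  have : IsFiniteMeasure (μ.restrict s) := isFiniteMeasure_restrict.2 hs
  (hf.memLp_lineDeriv a).integrable le_top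

theorem integrableOn_const_add_lineDeriv_mul_of_lipschitz (hs : μ s ≠ ∞)
    (hf : LipschitzWith K f) (hg : LipschitzWith L g) (p q : ℝ) (a b : E) :
    IntegrableOn (fun x ↦ (p + lineDeriv ℝ f x a) * (q + lineDeriv ℝ g x b)) s μ :=
  have : IsFiniteMeasure (μ.restrict s) := isFiniteMeasure_restrict.2 hs
  (((memLp_top_const q).add (hg.memLp_lineDeriv b)).mul
    ((memLp_top_const p).add (hf.memLp_lineDeriv a)) : MemLp _ ∞ _).integrable le_top

variable [FiniteDimensional ℝ E] [μ.IsAddHaarMeasure]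

theorem tendsto_setIntegral_inv_smul_fwdDiff (hs : μ s ≠ ∞) (hf : LipschitzWith K f) (a : E) :
    Tendsto (fun t : ℝ ↦ ∫ x in s, t⁻¹ • Δ_[t • a] f x ∂μ) (𝓝[≠] 0)
      (𝓝 (∫ x in s, lineDeriv ℝ f x a ∂μ)) := by
  have : IsFiniteMeasure (μ.restrict s) := isFiniteMeasure_restrict.2 hs
  refine tendsto_integral_filter_of_norm_le_const
    (.of_forall fun t ↦
      ((continuous_fwdDiff hf.continuous _).const_smul t⁻¹).aestronglyMeasurable)
    ⟨K * ‖a‖, .of_forall fun t ↦ .of_forall (norm_inv_smul_fwdDiff_le_of_lipschitz hf a t)⟩ ?_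
  filter_upwards [ae_restrict_of_ae (hf.ae_lineDifferentiableAt a)] with x hx
  exact hx.hasLineDerivAt.tendsto_slope_zero

theorem tendsto_setIntegral_inv_smul_fwdDiff_mul (hs : μ s ≠ ∞) (hf : LipschitzWith K f)
    (hg : LipschitzWith L g) (a b : E) :
    Tendsto (fun t : ℝ ↦ ∫ x in s, t⁻¹ • Δ_[t • a] f x * t⁻¹ • Δ_[t • b] g x ∂μ) (𝓝[≠] 0)
      (𝓝 (∫ x in s, lineDeriv ℝ f x a * lineDeriv ℝ g x b ∂μ)) := by
  have : IsFiniteMeasure (μ.restrict s) := isFiniteMeasure_restrict.2 hs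
  refine tendsto_integral_filter_of_norm_le_const
    (.of_forall fun t ↦ (((continuous_fwdDiff hf.continuous _).const_smul t⁻¹).mul
      ((continuous_fwdDiff hg.continuous _).const_smul t⁻¹)).aestronglyMeasurable)
    ⟨K * ‖a‖ * (L * ‖b‖), .of_forall fun t ↦ .of_forall fun x ↦ ?_⟩ ?_
  · exact norm_mul_le_of_le (norm_inv_smul_fwdDiff_le_of_lipschitz hf a t x)
      (norm_inv_smul_fwdDiff_le_of_lipschitz hg b t x)
  · filter_upwards [ae_restrict_of_ae (hf.ae_lineDifferentiableAt a),
      ae_restrict_of_ae (hg.ae_lineDifferentiableAt b)] with x hfx hgx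
    exact hfx.hasLineDerivAt.tendsto_slope_zero.mul hgx.hasLineDerivAt.tendsto_slope_zero

end Lipschitz

section FiniteDifference

theorem setIntegral_comp_add_right_of_periodic {E F : Type*} [AddCommGroup E] [MeasurableSpace E]
    [MeasurableAdd E] {μ : Measure E} [μ.IsAddLeftInvariant] [NormedAddCommGroup F]
    [NormedSpace ℝ F] {G : AddSubgroup E} [Countable G] {s : Set E}
    (hs : IsAddFundamentalDomain G s μ) {f : E → F} (hf : ∀ c ∈ G, f.Periodic c) (a : E) :
    ∫ x in s, f (x + a) ∂μ = ∫ x in s, f x ∂μ := by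
  calc ∫ x in s, f (x + a) ∂μ = ∫ x in s, f (a +ᵥ x) ∂μ := by simp only [vadd_eq_add, add_comm a]
    _ = ∫ x in a +ᵥ s, f x ∂μ :=
        ((measurePreserving_vadd a μ).setIntegral_image_emb
          (measurableEmbedding_const_vadd a) f s).symm
    _ = ∫ x in s, f x ∂μ := (hs.vadd_of_comm a).setIntegral_eq hs fun c x ↦ by
        simpa only [AddSubgroup.vadd_def, vadd_eq_add, add_comm x] using hf c c.2 x

variable {E : Type*} [NormedAddCommGroup E] [ProperSpace E] [MeasurableSpace E] [BorelSpace E]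
  {μ : Measure E} [μ.IsAddLeftInvariant] [IsFiniteMeasureOnCompacts μ] {G : AddSubgroup E}
  [Countable G] {s : Set E}

theorem setIntegral_fwdDiff_of_periodic {F : Type*} [NormedAddCommGroup F] [NormedSpace ℝ F]
    {f : E → F} (hs : IsAddFundamentalDomain G s μ) (hb : IsBounded s)
    (hf : ∀ c ∈ G, f.Periodic c) (hfc : Continuous f) (a : E) :
    ∫ x in s, Δ_[a] f x ∂μ = 0 := by
  unfold fwdDiff
  rw [integral_sub (integrableOn_of_continuous_of_isBounded hb (by fun_prop))
    (integrableOn_of_continuous_of_isBounded hb hfc),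
    setIntegral_comp_add_right_of_periodic hs hf, sub_self]

variable {A : Type*} [NormedRing A] [NormedAlgebra ℝ A] {f g : E → A}

theorem setIntegral_fwdDiff_mul_of_periodic (hs : IsAddFundamentalDomain G s μ) (hb : IsBounded s)
    (hf : ∀ c ∈ G, f.Periodic c) (hg : ∀ c ∈ G, g.Periodic c) (hfc : Continuous f)
    (hgc : Continuous g) (a : E) :
    ∫ x in s, Δ_[a] f x * g x ∂μ = ∫ x in s, f x * Δ_[-a] g x ∂μ := by
  have hper : ∀ c ∈ G, (fun x ↦ f x * g (x + -a)).Periodic c := fun c hc ↦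
    (hf c hc).mul ((hg c hc).add_const (-a))
  have hΔf := continuous_fwdDiff hfc a
  have hΔg := continuous_fwdDiff hgc (-a)
  rw [← sub_eq_zero, ← integral_sub
    (integrableOn_of_continuous_of_isBounded hb (by fun_prop))
    (integrableOn_of_continuous_of_isBounded hb (by fun_prop)),
    ← setIntegral_fwdDiff_of_periodic hs hb hper (by fun_prop) a]
  congr with x
  simp only [fwdDiff, add_neg_cancel_right]
  noncomm_ring

theorem setIntegral_fwdDiff_mul_fwdDiff_of_periodic (hs : IsAddFundamentalDomain G s μ)
    (hb : IsBounded s) (hf : ∀ c ∈ G, f.Periodic c) (hg : ∀ c ∈ G, g.Periodic c)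
    (hfc : Continuous f) (hgc : Continuous g) (a b : E) :
    ∫ x in s, Δ_[a] f x * Δ_[b] g x ∂μ = ∫ x in s, Δ_[-b] f x * Δ_[-a] g x ∂μ := by
  calc ∫ x in s, Δ_[a] f x * Δ_[b] g x ∂μ = ∫ x in s, f x * Δ_[-a] (Δ_[b] g) x ∂μ :=
        setIntegral_fwdDiff_mul_of_periodic hs hb hf (fun c hc ↦ periodic_fwdDiff (hg c hc) b) hfc
          (continuous_fwdDiff hgc b) a
    _ = ∫ x in s, f x * Δ_[- -b] (Δ_[-a] g) x ∂μ := by rw [neg_neg, fwdDiff_fwdDiff_comm]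
    _ = ∫ x in s, Δ_[-b] f x * Δ_[-a] g x ∂μ :=
        (setIntegral_fwdDiff_mul_of_periodic hs hb hf (fun c hc ↦ periodic_fwdDiff (hg c hc) (-a))
          hfc (continuous_fwdDiff hgc (-a)) (-b)).symm

end FiniteDifference

section Derivative

variable {E : Type*} [NormedAddCommGroup E] [NormedSpace ℝ E] [FiniteDimensional ℝ E]
  [MeasurableSpace E] [BorelSpace E] {μ : Measure E} [μ.IsAddHaarMeasure]
  {G : AddSubgroup E} [Countable G] {s : Set E} {f g : E → ℝ} {K L : ℝ≥0}

theorem setIntegral_lineDeriv_of_periodic (hs : IsAddFundamentalDomain G s μ) (hb : IsBounded s)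
    (hf : ∀ c ∈ G, f.Periodic c) (hfl : LipschitzWith K f) (a : E) :
    ∫ x in s, lineDeriv ℝ f x a ∂μ = 0 := by
  refine tendsto_nhds_unique
    (tendsto_setIntegral_inv_smul_fwdDiff hb.measure_lt_top.ne hfl a) ?_
  simp only [integral_smul, setIntegral_fwdDiff_of_periodic hs hb hf hfl.continuous, smul_zero,
    tendsto_const_nhds]

theorem setIntegral_lineDeriv_mul_lineDeriv_comm_of_periodic (hs : IsAddFundamentalDomain G s μ)
    (hb : IsBounded s) (hf : ∀ c ∈ G, f.Periodic c) (hg : ∀ c ∈ G, g.Periodic c)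
    (hfl : LipschitzWith K f) (hgl : LipschitzWith L g) (a b : E) :
    ∫ x in s, lineDeriv ℝ f x a * lineDeriv ℝ g x b ∂μ =
      ∫ x in s, lineDeriv ℝ f x b * lineDeriv ℝ g x a ∂μ := by
  have hfin : μ s ≠ ∞ := hb.measure_lt_top.ne
  have hquot (t : ℝ) : ∫ x in s, t⁻¹ • Δ_[t • a] f x * t⁻¹ • Δ_[t • b] g x ∂μ =
      ∫ x in s, t⁻¹ • Δ_[t • -b] f x * t⁻¹ • Δ_[t • -a] g x ∂μ := by
    simp only [smul_mul_smul_comm, integral_smul, smul_neg]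
    rw [setIntegral_fwdDiff_mul_fwdDiff_of_periodic hs hb hf hg hfl.continuous hgl.continuous]
  have hlim : ∫ x in s, lineDeriv ℝ f x a * lineDeriv ℝ g x b ∂μ =
      ∫ x in s, lineDeriv ℝ f x (-b) * lineDeriv ℝ g x (-a) ∂μ :=
    tendsto_nhds_unique_of_eventuallyEq
      (tendsto_setIntegral_inv_smul_fwdDiff_mul hfin hfl hgl a b)
      (tendsto_setIntegral_inv_smul_fwdDiff_mul hfin hfl hgl (-b) (-a)) (.of_forall hquot)
  simpa only [lineDeriv_neg, neg_mul_neg] using hlim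

theorem setIntegral_const_add_lineDeriv_mul_of_periodic
    (hs : IsAddFundamentalDomain G s μ) (hb : IsBounded s) (hf : ∀ c ∈ G, f.Periodic c)
    (hg : ∀ c ∈ G, g.Periodic c) (hfl : LipschitzWith K f) (hgl : LipschitzWith L g) (p q : ℝ)
    (a b : E) :
    ∫ x in s, (p + lineDeriv ℝ f x a) * (q + lineDeriv ℝ g x b) ∂μ =
      μ.real s * (p * q) + ∫ x in s, lineDeriv ℝ f x a * lineDeriv ℝ g x b ∂μ := by
  have hfin : μ s ≠ ∞ := hb.measure_lt_top.ne
  have hpq : IntegrableOn (fun _ ↦ p * q) s μ := integrableOn_const hfin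
  have hqf := (integrableOn_lineDeriv_of_lipschitz hfin hfl a).const_mul q
  have hpg := (integrableOn_lineDeriv_of_lipschitz hfin hgl b).const_mul p
  have hfg : IntegrableOn (fun x ↦ lineDeriv ℝ f x a * lineDeriv ℝ g x b) s μ := by
    simpa only [zero_add] using
      integrableOn_const_add_lineDeriv_mul_of_lipschitz hfin hfl hgl 0 0 a b
  calc ∫ x in s, (p + lineDeriv ℝ f x a) * (q + lineDeriv ℝ g x b) ∂μ
      = ∫ x in s, (p * q + q * lineDeriv ℝ f x a + p * lineDeriv ℝ g x b +
          lineDeriv ℝ f x a * lineDeriv ℝ g x b) ∂μ := by congr with x; ring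
    _ = (∫ _ in s, p * q ∂μ) + q * (∫ x in s, lineDeriv ℝ f x a ∂μ) +
          p * (∫ x in s, lineDeriv ℝ g x b ∂μ) +
          ∫ x in s, lineDeriv ℝ f x a * lineDeriv ℝ g x b ∂μ := by
        rw [integral_add (by exact (hpq.add hqf).add hpg) hfg,
          integral_add (by exact hpq.add hqf) hpg, integral_add hpq hqf, integral_const_mul q,
          integral_const_mul p (fun x ↦ lineDeriv ℝ g x b)]
    _ = μ.real s * (p * q) + ∫ x in s, lineDeriv ℝ f x a * lineDeriv ℝ g x b ∂μ := by
        rw [setIntegral_const, smul_eq_mul, setIntegral_lineDeriv_of_periodic hs hb hf hfl,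
          setIntegral_lineDeriv_of_periodic hs hb hg hgl, mul_zero, mul_zero, add_zero, add_zero]

theorem setIntegral_minor_const_add_lineDeriv_of_periodic (hs : IsAddFundamentalDomain G s μ)
    (hb : IsBounded s) (hf : ∀ c ∈ G, f.Periodic c) (hg : ∀ c ∈ G, g.Periodic c)
    (hfl : LipschitzWith K f) (hgl : LipschitzWith L g) (p q r t : ℝ) (a b : E) :
    ∫ x in s, ((p + lineDeriv ℝ f x a) * (q + lineDeriv ℝ g x b) -
      (r + lineDeriv ℝ f x b) * (t + lineDeriv ℝ g x a)) ∂μ = μ.real s * (p * q - r * t) := by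
  have hint := integrableOn_const_add_lineDeriv_mul_of_lipschitz hb.measure_lt_top.ne hfl hgl
    (μ := μ)
  have hmul := setIntegral_const_add_lineDeriv_mul_of_periodic hs hb hf hg hfl hgl
  rw [integral_sub (hint p q a b) (hint r t b a), hmul, hmul,
    setIntegral_lineDeriv_mul_lineDeriv_comm_of_periodic hs hb hf hg hfl hgl a b]
  ring

theorem stmt_9_general (hs : IsAddFundamentalDomain G s μ) (hb : IsBounded s)
    {v : E → Fin 2 → ℝ} (hlip : LipschitzWith K v) (hper : ∀ c ∈ G, v.Periodic c)
    (M : Matrix (Fin 2) (Fin 2) ℝ) (e : Fin 2 → E) :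
    ∫ x in s, det2 (M + Matrix.of fun i j ↦ fderiv ℝ v x (e j) i) ∂μ = μ.real s * det2 M := by
  have hlip' (i : Fin 2) : LipschitzWith K fun x ↦ v x i := by
    simpa only [one_mul, Function.comp_def] using (LipschitzWith.eval i).comp hlip
  have hper' (i : Fin 2) : ∀ c ∈ G, (fun x ↦ v x i).Periodic c := fun c hc x ↦
    congrFun (hper c hc x) i
  have hderiv : ∀ᵐ x ∂μ, ∀ i j, fderiv ℝ v x (e j) i = lineDeriv ℝ (fun y ↦ v y i) x (e j) := by
    filter_upwards [hlip.ae_differentiableAt] with x hx i j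
    rw [(differentiableAt_pi.1 hx i).lineDeriv_eq_fderiv, fderiv_apply hx]
    rfl
  calc ∫ x in s, det2 (M + Matrix.of fun i j ↦ fderiv ℝ v x (e j) i) ∂μ
      = ∫ x in s, ((M 0 0 + lineDeriv ℝ (fun y ↦ v y 0) x (e 0)) *
            (M 1 1 + lineDeriv ℝ (fun y ↦ v y 1) x (e 1)) -
          (M 0 1 + lineDeriv ℝ (fun y ↦ v y 0) x (e 1)) *
            (M 1 0 + lineDeriv ℝ (fun y ↦ v y 1) x (e 0))) ∂μ := by
        refine integral_congr_ae ?_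
        filter_upwards [ae_restrict_of_ae hderiv] with x hx
        simp only [det2, Matrix.add_apply, Matrix.of_apply, hx]
    _ = μ.real s * det2 M :=
        setIntegral_minor_const_add_lineDeriv_of_periodic hs hb (hper' 0) (hper' 1) (hlip' 0)
          (hlip' 1) _ _ _ _ _ _

end Derivative

section UnitCell

theorem isBounded_unitCell : IsBounded unitCell :=
  IsBounded.pi fun _ ↦ Metric.isBounded_Ico 0 1

theorem volume_real_unitCell : volume.real unitCell = 1 := by
  simp [unitCell, measureReal_def, volume_pi_pi]

/-- The lattice `ℤ²` in `ℝ²`, as the span of the standard basis so that the results on `ZSpan`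
apply. -/
def zsqLattice : AddSubgroup (Fin 2 → ℝ) :=
  (Submodule.span ℤ (Set.range (Pi.basisFun ℝ (Fin 2)))).toAddSubgroup

instance : Countable zsqLattice :=
  inferInstanceAs (Countable (Submodule.span ℤ (Set.range (Pi.basisFun ℝ (Fin 2)))))

theorem isAddFundamentalDomain_unitCell : IsAddFundamentalDomain zsqLattice unitCell volume := by
  rw [unitCell, ← ZSpan.fundamentalDomain_pi_basisFun]
  exact ZSpan.isAddFundamentalDomain' (Pi.basisFun ℝ (Fin 2)) volume

theorem ZsqPeriodic.periodic_of_mem_zsqLattice {v : (Fin 2 → ℝ) → (Fin 2 → ℝ)}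
    (hv : ZsqPeriodic v) : ∀ c ∈ zsqLattice, v.Periodic c := by
  intro c hc x
  choose z hz using ((Pi.basisFun ℝ (Fin 2)).mem_span_iff_repr_mem ℤ c).1 hc
  obtain rfl : (fun i ↦ (z i : ℝ)) = c := funext hz
  exact hv x z

end UnitCell

theorem stmt_9 (v : (Fin 2 → ℝ) → (Fin 2 → ℝ)) (K : NNReal)
    (hlip : LipschitzWith K v) (hper : ZsqPeriodic v)
    (M : Matrix (Fin 2) (Fin 2) ℝ) :
    (∫ x in unitCell, det2 (M + jac v x)) = det2 M ∧
    (det2 M = 0 → (∫ x in unitCell, det2 (M + jac v x)) = 0) := by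
  have hint : ∫ x in unitCell, det2 (M + jac v x) = det2 M := by
    simpa only [jac, volume_real_unitCell, one_mul] using
      stmt_9_general isAddFundamentalDomain_unitCell isBounded_unitCell hlip
        hper.periodic_of_mem_zsqLattice M fun j ↦ Pi.single j 1
  exact ⟨hint, hint.trans⟩
end

section
/- (Loss of strong ellipticity for the half-half laminate.) Assume the Gutiérrez conditions and let χ_lam : ℝ² → {0,1} be the 1-periodic laminate χ_lam(x) = 1 if the fractional part of x₁ lies in [0,1/2) and χ_lam(x) = 0 otherwise. Let M = e₂⊗e₂ (the matrix with M₂₂ = 1 and all other entries 0). Then: (i) for every Lipschitz ℤ²-periodic v : ℝ² → ℝ², ∫_{[0,1)²} [χ_lam(x)·Q₁(M + Dv(x)) + (1−χ_lam(x))·Q₂(M + Dv(x))] dx ≥ 0; and (ii) there exists a Lipschitz ℤ²-periodic v : ℝ² → ℝ² for which this integral equals 0. Hence the infimum of the periodic cell energy in the rank-one direction e₂⊗e₂ equals 0, i.e. the homogenized tensor loses strict strong ellipticity. -/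
open MeasureTheory

/-- The isotropic elasticity quadratic form on 2×2 real matrices with Lamé
parameters `lam`, `mu`: `Q_{λ,μ}(A) = (λ+2μ)(A₁₁²+A₂₂²) + 2λA₁₁A₂₂ + μ(A₁₂+A₂₁)²`. -/
def isoQ (lam mu : ℝ) (A : Matrix (Fin 2) (Fin 2) ℝ) : ℝ :=
  (lam + 2 * mu) * ((A 0 0) ^ 2 + (A 1 1) ^ 2) + 2 * lam * (A 0 0 * A 1 1)
    + mu * (A 0 1 + A 1 0) ^ 2

/-- The half-half laminate indicator: `1` iff the fractional part of `x₁` is in `[0,1/2)`. -/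
noncomputable def lamChi (x : Fin 2 → ℝ) : ℝ :=
  if Int.fract (x 0) < 1 / 2 then 1 else 0

/-- The rank-one matrix `e₂ ⊗ e₂`. -/
def e2e2 : Matrix (Fin 2) (Fin 2) ℝ := Matrix.of fun i j => if i = 1 ∧ j = 1 then 1 else 0

/-- The periodic cell energy of the half-half laminate in the direction `e₂ ⊗ e₂`. -/
noncomputable def lamEnergy (lam1 mu1 lam2 mu2 : ℝ)
    (v : (Fin 2 → ℝ) → (Fin 2 → ℝ)) : ℝ :=
  ∫ x in unitCell,
    (lamChi x * isoQ lam1 mu1 (e2e2 + jac v x)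
      + (1 - lamChi x) * isoQ lam2 mu2 (e2e2 + jac v x))

open Filter Function Topology
open scoped NNReal

/-!
Under `μ₁ = -(λ₂ + μ₂)`, adding `4 μ₁ det` to either phase leaves a sum of squares with nonnegative
weights. The determinant is a null Lagrangian: `∫ det (M + Dv) = det M` for every Lipschitz
periodic `v`, because summation by parts exchanges the directions of two difference quotients.
As `det (e₂ ⊗ e₂) = 0`, the cell energy is nonnegative. A sawtooth in the direction of lamination
makes `e₂ ⊗ e₂ + Dv` equal to `diag (-1, 1)` in phase 1 and `diag (1, 1)` in phase 2, where the
squares with nonzero weight vanish.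
-/

section FundamentalDomain

variable {E : Type*} [AddCommGroup E] [MeasurableSpace E] [MeasurableAdd E] {μ : Measure E}
  [μ.IsAddLeftInvariant] {L : AddSubgroup E} [Countable L] {D : Set E}

theorem setIntegral_comp_add_right_of_periodic_s11 {F : Type*} [NormedAddCommGroup F] [NormedSpace ℝ F]
    (hD : IsAddFundamentalDomain L D μ) {f : E → F} (hf : ∀ g ∈ L, Periodic f g) (t : E) :
    ∫ x in D, f (x + t) ∂μ = ∫ x in D, f x ∂μ := by
  have hinv (g : L) (x : E) : f (g +ᵥ x) = f x := by
    rw [AddSubgroup.vadd_def, vadd_eq_add, add_comm, hf g g.2 x]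
  rw [← (hD.vadd_of_comm t).setIntegral_eq hD hinv, ← Set.image_vadd,
    (measurePreserving_vadd t μ).setIntegral_image_emb (measurableEmbedding_const_vadd t)]
  simp only [vadd_eq_add, add_comm]

end FundamentalDomain

section PeriodicLipschitz

variable {E : Type*} [NormedAddCommGroup E] [NormedSpace ℝ E]

theorem norm_inv_smul_fwdDiff_le {F : Type*} [NormedAddCommGroup F] [NormedSpace ℝ F] {u : E → F}
    {K : ℝ≥0} (hu : LipschitzWith K u) (h : ℝ) (a x : E) :
    ‖h⁻¹ • fwdDiff (h • a) u x‖ ≤ K * ‖a‖ := by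
  have hdiff : ‖fwdDiff (h • a) u x‖ ≤ |h| * (K * ‖a‖) := by
    simpa [fwdDiff, norm_smul, mul_left_comm] using hu.norm_sub_le (x + h • a) x
  rw [norm_smul, norm_inv, Real.norm_eq_abs]
  exact inv_mul_le_of_le_mul₀ (abs_nonneg h) (by positivity) hdiff

theorem integrableOn_of_isBounded {X F : Type*} [PseudoMetricSpace X] [ProperSpace X]
    [MeasurableSpace X] [OpensMeasurableSpace X] {μ : Measure X} [IsFiniteMeasureOnCompacts μ]
    [NormedAddCommGroup F] {f : X → F} (hf : Continuous f) {s : Set X}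
    (hs : Bornology.IsBounded s) : IntegrableOn f s μ :=
  (hf.continuousOn.integrableOn_compact' hs.isCompact_closure
    isClosed_closure.measurableSet).mono_set subset_closure

variable [FiniteDimensional ℝ E] [MeasurableSpace E] [BorelSpace E] {μ : Measure E}

theorem integrableOn_comp_fderiv {F G : Type*} [NormedAddCommGroup F] [NormedSpace ℝ F]
    [FiniteDimensional ℝ F] [NormedAddCommGroup G] {v : E → F} {K : ℝ≥0} (hv : LipschitzWith K v)
    {Φ : (E →L[ℝ] F) → G} (hΦ : Continuous Φ) {s : Set E} (hs : μ s ≠ ⊤) :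
    IntegrableOn (fun x => Φ (fderiv ℝ v x)) s μ := by
  obtain ⟨C, hC⟩ := (isCompact_closedBall (0 : E →L[ℝ] F) K).exists_bound_of_continuousOn
    hΦ.continuousOn
  have hmeas : AEStronglyMeasurable (fun x => Φ (fderiv ℝ v x)) (μ.restrict s) :=
    (hΦ.stronglyMeasurable.comp_measurable (measurable_fderiv ℝ v)).aestronglyMeasurable
  refine .of_bound hs.lt_top hmeas C (ae_of_all _ fun x => hC _ ?_)
  simpa using norm_fderiv_le_of_lipschitz ℝ hv

variable [μ.IsAddHaarMeasure] {L : AddSubgroup E} [Countable L] {D : Set E} {u w : E → ℝ}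
  {K K' : ℝ≥0}

theorem setIntegral_fwdDiff_mul (hD : IsAddFundamentalDomain L D μ) (hb : Bornology.IsBounded D)
    (hu : Continuous u) (hup : ∀ g ∈ L, Periodic u g)
    (hw : Continuous w) (hwp : ∀ g ∈ L, Periodic w g) (t : E) :
    ∫ x in D, fwdDiff t u x * w x ∂μ = ∫ x in D, u x * fwdDiff (-t) w x ∂μ := by
  have hint {f : E → ℝ} (hf : Continuous f) : IntegrableOn f D μ :=
    integrableOn_of_isBounded hf hb
  have hshift : ∫ x in D, u (x + t) * w x ∂μ = ∫ x in D, u x * w (x + -t) ∂μ := by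
    have hper : ∀ g ∈ L, Periodic (fun x => u x * w (x + -t)) g := fun g hg =>
      (hup g hg).mul ((hwp g hg).add_const (-t))
    rw [← setIntegral_comp_add_right_of_periodic_s11 hD hper t]
    simp only [add_neg_cancel_right]
  calc ∫ x in D, fwdDiff t u x * w x ∂μ
      = ∫ x in D, u (x + t) * w x ∂μ - ∫ x in D, u x * w x ∂μ := by
        rw [← integral_sub (hint (by fun_prop)) (hint (by fun_prop))]
        simp only [fwdDiff, sub_mul]
    _ = ∫ x in D, u x * fwdDiff (-t) w x ∂μ := by
        rw [hshift, ← integral_sub (hint (by fun_prop)) (hint (by fun_prop))]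
        simp only [fwdDiff, mul_sub]

theorem setIntegral_fwdDiff_mul_fwdDiff (hD : IsAddFundamentalDomain L D μ)
    (hb : Bornology.IsBounded D) (hu : Continuous u) (hup : ∀ g ∈ L, Periodic u g)
    (hw : Continuous w) (hwp : ∀ g ∈ L, Periodic w g) (s t : E) :
    ∫ x in D, fwdDiff s u x * fwdDiff t w x ∂μ =
      ∫ x in D, fwdDiff (-t) u x * fwdDiff (-s) w x ∂μ := by
  have hcont (r : E) : Continuous (fwdDiff r w) := by unfold fwdDiff; fun_prop
  have hper (r : E) : ∀ g ∈ L, Periodic (fwdDiff r w) g := fun g hg =>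
    ((hwp g hg).add_const r).sub (hwp g hg)
  have hcomm : fwdDiff (-s) (fwdDiff t w) = fwdDiff t (fwdDiff (-s) w) := by
    funext x
    simp only [fwdDiff, add_right_comm x]
    ring
  rw [setIntegral_fwdDiff_mul hD hb hu hup (hcont t) (hper t), hcomm,
    setIntegral_fwdDiff_mul hD hb hu hup (hcont (-s)) (hper (-s)), neg_neg]

theorem tendsto_setIntegral_slope_mul_slope (hu : LipschitzWith K u) (hw : LipschitzWith K' w)
    (hD : μ D ≠ ⊤) (a b : E) :
    Tendsto (fun h : ℝ => ∫ x in D,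
        (h⁻¹ • fwdDiff (h • a) u x) * (h⁻¹ • fwdDiff (h • b) w x) ∂μ) (𝓝[>] 0)
      (𝓝 (∫ x in D, lineDeriv ℝ u x a * lineDeriv ℝ w x b ∂μ)) := by
  refine tendsto_integral_filter_of_dominated_convergence (fun _ => K * ‖a‖ * (K' * ‖b‖))
    (.of_forall fun h => ?_) (.of_forall fun h => ae_of_all _ fun x => ?_)
    (integrableOn_const hD) ?_
  · have := hu.continuous
    have := hw.continuous
    exact Continuous.aestronglyMeasurable (by unfold fwdDiff; fun_prop)
  · rw [norm_mul]
    gcongr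
    exacts [norm_inv_smul_fwdDiff_le hu h a x, norm_inv_smul_fwdDiff_le hw h b x]
  · filter_upwards [ae_restrict_of_ae (hu.ae_lineDifferentiableAt a),
      ae_restrict_of_ae (hw.ae_lineDifferentiableAt b)] with x hxu hxw
    exact hxu.hasLineDerivAt.tendsto_slope_zero_right.mul
      hxw.hasLineDerivAt.tendsto_slope_zero_right

theorem setIntegral_lineDeriv_mul_lineDeriv_comm (hD : IsAddFundamentalDomain L D μ)
    (hb : Bornology.IsBounded D) (hu : LipschitzWith K u) (hup : ∀ g ∈ L, Periodic u g)
    (hw : LipschitzWith K' w) (hwp : ∀ g ∈ L, Periodic w g) (a b : E) :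
    ∫ x in D, lineDeriv ℝ u x a * lineDeriv ℝ w x b ∂μ =
      ∫ x in D, lineDeriv ℝ u x b * lineDeriv ℝ w x a ∂μ := by
  have hlim := tendsto_setIntegral_slope_mul_slope hu hw hb.measure_lt_top.ne (μ := μ)
  have hswap := hlim (-b) (-a)
  simp only [lineDeriv_neg, neg_mul_neg] at hswap
  refine tendsto_nhds_unique (hlim a b) (hswap.congr fun h => ?_)
  simp only [smul_mul_smul_comm, smul_neg, integral_smul]
  rw [setIntegral_fwdDiff_mul_fwdDiff hD hb hu.continuous hup hw.continuous hwp,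
    neg_neg, neg_neg]

theorem setIntegral_lineDeriv_eq_zero (hD : IsAddFundamentalDomain L D μ)
    (hb : Bornology.IsBounded D) (hu : LipschitzWith K u) (hup : ∀ g ∈ L, Periodic u g) (a : E) :
    ∫ x in D, lineDeriv ℝ u x a ∂μ = 0 := by
  have hcont := hu.continuous
  have hlim : Tendsto (fun h : ℝ => ∫ x in D, h⁻¹ • fwdDiff (h • a) u x ∂μ) (𝓝[>] 0)
      (𝓝 (∫ x in D, lineDeriv ℝ u x a ∂μ)) := by
    refine tendsto_integral_filter_of_dominated_convergence (fun _ => K * ‖a‖)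
      (.of_forall fun h => Continuous.aestronglyMeasurable (by unfold fwdDiff; fun_prop))
      (.of_forall fun h => ae_of_all _ fun x => norm_inv_smul_fwdDiff_le hu h a x)
      (integrableOn_const hb.measure_lt_top.ne) ?_
    filter_upwards [ae_restrict_of_ae (hu.ae_lineDifferentiableAt a)] with x hx
    exact hx.hasLineDerivAt.tendsto_slope_zero_right
  refine tendsto_nhds_unique hlim (tendsto_const_nhds.congr fun h => ?_)
  have hzero : ∫ x in D, fwdDiff (h • a) u x ∂μ = 0 := by
    unfold fwdDiff
    rw [integral_sub (integrableOn_of_isBounded (by fun_prop) hb)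
      (integrableOn_of_isBounded (by fun_prop) hb),
      setIntegral_comp_add_right_of_periodic_s11 hD hup, sub_self]
  rw [integral_smul, hzero, smul_zero]

end PeriodicLipschitz

section UnitCell

/-- The integer lattice `ℤ²`, as the group of translations for which `unitCell` is a fundamental
domain. -/
abbrev intLattice : AddSubgroup (Fin 2 → ℝ) :=
  (Submodule.span ℤ (Set.range (Pi.basisFun ℝ (Fin 2)))).toAddSubgroup

instance countable_intLattice : Countable intLattice :=
  inferInstanceAs (Countable (Submodule.span ℤ (Set.range (Pi.basisFun ℝ (Fin 2)))))

theorem unitCell_eq_fundamentalDomain :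
    unitCell = ZSpan.fundamentalDomain (Pi.basisFun ℝ (Fin 2)) :=
  ZSpan.fundamentalDomain_pi_basisFun.symm

theorem isAddFundamentalDomain_unitCell_s11 :
    IsAddFundamentalDomain intLattice unitCell (volume : Measure (Fin 2 → ℝ)) := by
  rw [unitCell_eq_fundamentalDomain]
  exact ZSpan.isAddFundamentalDomain' _ _

theorem isBounded_unitCell_s11 : Bornology.IsBounded unitCell := by
  rw [unitCell_eq_fundamentalDomain]
  exact ZSpan.fundamentalDomain_isBounded _

theorem measurableSet_unitCell : MeasurableSet unitCell :=
  MeasurableSet.univ_pi fun _ => measurableSet_Ico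

theorem volume_unitCell : volume unitCell = 1 := by
  simp [unitCell, volume_pi_pi]

end UnitCell

section Jacobian

variable {v : (Fin 2 → ℝ) → (Fin 2 → ℝ)} {K : ℝ≥0}

theorem ZsqPeriodic.periodic_apply (hp : ZsqPeriodic v) (i : Fin 2) :
    ∀ g ∈ intLattice, Periodic (fun x => v x i) g := by
  intro g hg x
  rw [Submodule.mem_toAddSubgroup, Module.Basis.mem_span_iff_repr_mem] at hg
  choose z hz using hg
  have hgz : g = fun j => (z j : ℝ) := funext fun j => by simpa using (hz j).symm
  exact congrFun (hgz ▸ hp x z) i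

theorem jac_apply_eq_lineDeriv {x : Fin 2 → ℝ} (hx : DifferentiableAt ℝ v x) (i j : Fin 2) :
    jac v x i j = lineDeriv ℝ (fun y => v y i) x (Pi.single j 1) :=
  ((hasFDerivAt_pi'.1 hx.hasFDerivAt i).hasLineDerivAt _).lineDeriv.symm

theorem ae_jac_apply_eq_lineDeriv (hv : LipschitzWith K v) (i j : Fin 2) :
    ∀ᵐ x, jac v x i j = lineDeriv ℝ (fun y => v y i) x (Pi.single j 1) :=
  hv.ae_differentiableAt.mono fun _ hx => jac_apply_eq_lineDeriv hx i j

theorem integrableOn_unitCell_comp_jac (hv : LipschitzWith K v)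
    {Φ : Matrix (Fin 2) (Fin 2) ℝ → ℝ} (hΦ : Continuous Φ) :
    IntegrableOn (fun x => Φ (jac v x)) unitCell :=
  integrableOn_comp_fderiv hv (Φ := fun T => Φ (.of fun i j => T (Pi.single j 1) i))
    (hΦ.comp (by fun_prop)) isBounded_unitCell_s11.measure_lt_top.ne

theorem integral_unitCell_jac_apply (hv : LipschitzWith K v) (hp : ZsqPeriodic v) (i j : Fin 2) :
    ∫ x in unitCell, jac v x i j = 0 := by
  rw [integral_congr_ae (ae_restrict_of_ae (ae_jac_apply_eq_lineDeriv hv i j))]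
  exact setIntegral_lineDeriv_eq_zero isAddFundamentalDomain_unitCell_s11 isBounded_unitCell_s11
    ((LipschitzWith.eval i).comp hv) (hp.periodic_apply i) _

theorem integral_unitCell_det_jac (hv : LipschitzWith K v) (hp : ZsqPeriodic v) :
    ∫ x in unitCell, (jac v x).det = 0 := by
  have hprod (i j k l : Fin 2) : ∫ x in unitCell, jac v x i j * jac v x k l =
      ∫ x in unitCell, lineDeriv ℝ (fun y => v y i) x (Pi.single j 1) *
        lineDeriv ℝ (fun y => v y k) x (Pi.single l 1) := by
    refine integral_congr_ae (ae_restrict_of_ae ?_)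
    filter_upwards [ae_jac_apply_eq_lineDeriv hv i j, ae_jac_apply_eq_lineDeriv hv k l]
      with x hij hkl
    rw [hij, hkl]
  have hswap : ∫ x in unitCell, jac v x 0 0 * jac v x 1 1 =
      ∫ x in unitCell, jac v x 0 1 * jac v x 1 0 := by
    rw [hprod, hprod]
    exact setIntegral_lineDeriv_mul_lineDeriv_comm isAddFundamentalDomain_unitCell_s11
      isBounded_unitCell_s11 ((LipschitzWith.eval 0).comp hv) (hp.periodic_apply 0)
      ((LipschitzWith.eval 1).comp hv) (hp.periodic_apply 1) _ _
  simp only [Matrix.det_fin_two]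
  rw [integral_sub, hswap, sub_self]
  · exact integrableOn_unitCell_comp_jac hv (Φ := fun A => A 0 0 * A 1 1) (by fun_prop)
  · exact integrableOn_unitCell_comp_jac hv (Φ := fun A => A 0 1 * A 1 0) (by fun_prop)

theorem det_add_fin_two {R : Type*} [CommRing R] (A B : Matrix (Fin 2) (Fin 2) R) :
    (A + B).det = A.det + (A.adjugate * B).trace + B.det := by
  simp only [Matrix.det_fin_two, Matrix.adjugate_fin_two, Matrix.trace_fin_two, Matrix.mul_apply,
    Fin.sum_univ_two, Matrix.add_apply]
  simp only [Matrix.of_apply, Matrix.cons_val', Matrix.cons_val_zero, Matrix.cons_val_fin_one,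
    Matrix.cons_val_one, neg_mul]
  ring

theorem integral_unitCell_trace_mul_jac (hv : LipschitzWith K v) (hp : ZsqPeriodic v)
    (B : Matrix (Fin 2) (Fin 2) ℝ) : ∫ x in unitCell, (B * jac v x).trace = 0 := by
  have hint (i j : Fin 2) : IntegrableOn (fun x => B i j * jac v x j i) unitCell :=
    integrableOn_unitCell_comp_jac hv (Φ := fun A => B i j * A j i) (by fun_prop)
  simp only [Matrix.trace, Matrix.diag_apply, Matrix.mul_apply]
  rw [integral_finsetSum _ fun i _ => integrable_finsetSum _ fun j _ => hint i j]
  simp only [integral_finsetSum _ fun j _ => hint _ j, integral_const_mul,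
    integral_unitCell_jac_apply hv hp, mul_zero, Finset.sum_const_zero]

theorem integral_unitCell_det_add_jac (hv : LipschitzWith K v) (hp : ZsqPeriodic v)
    (M : Matrix (Fin 2) (Fin 2) ℝ) : ∫ x in unitCell, (M + jac v x).det = M.det := by
  have htr : IntegrableOn (fun x => (M.adjugate * jac v x).trace) unitCell :=
    integrableOn_unitCell_comp_jac hv (Φ := fun A => (M.adjugate * A).trace) (by fun_prop)
  have hdet : IntegrableOn (fun x => (jac v x).det) unitCell :=
    integrableOn_unitCell_comp_jac hv (Φ := Matrix.det) (by fun_prop)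
  have hconst : IntegrableOn (fun _ => M.det) unitCell (volume : Measure (Fin 2 → ℝ)) :=
    integrableOn_const isBounded_unitCell_s11.measure_lt_top.ne
  calc ∫ x in unitCell, (M + jac v x).det
      = ∫ x in unitCell, (M.det + (M.adjugate * jac v x).trace + (jac v x).det) := by
        simp only [det_add_fin_two]
    _ = (∫ _ in unitCell, M.det) + (∫ x in unitCell, (M.adjugate * jac v x).trace) +
          ∫ x in unitCell, (jac v x).det := by
        rw [← integral_add hconst htr]
        exact integral_add (hconst.add htr) hdet
    _ = M.det := by
        simp [integral_unitCell_trace_mul_jac hv hp, integral_unitCell_det_jac hv hp,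
          measureReal_def, volume_unitCell]

end Jacobian

section Energy

theorem continuous_isoQ (lam mu : ℝ) : Continuous (isoQ lam mu) := by
  unfold isoQ
  fun_prop

theorem isoQ_add_four_mul_det (lam mu c : ℝ) (A : Matrix (Fin 2) (Fin 2) ℝ) :
    isoQ lam mu A + 4 * c * A.det = (lam + mu + c) * (A 0 0 + A 1 1) ^ 2
      + (mu - c) * ((A 0 0 - A 1 1) ^ 2 + (A 0 1 + A 1 0) ^ 2) + c * (A 0 1 - A 1 0) ^ 2 := by
  rw [isoQ, Matrix.det_fin_two]
  ring

theorem neg_four_mul_det_le_isoQ {lam mu c : ℝ} (hc : 0 ≤ c) (hcmu : c ≤ mu)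
    (hsum : 0 ≤ lam + mu + c) (A : Matrix (Fin 2) (Fin 2) ℝ) :
    -(4 * c) * A.det ≤ isoQ lam mu A := by
  have hsq : 0 ≤ isoQ lam mu A + 4 * c * A.det := by
    rw [isoQ_add_four_mul_det]
    have := sub_nonneg.2 hcmu
    positivity
  linarith

theorem measurable_lamChi : Measurable lamChi :=
  Measurable.ite (measurableSet_lt (measurable_fract.comp (measurable_pi_apply 0))
    measurable_const) measurable_const measurable_const

theorem lamChi_eq_one_or_zero (x : Fin 2 → ℝ) : lamChi x = 1 ∨ lamChi x = 0 :=
  ite_eq_or_eq _ _ _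

/-- The integrand of the cell energy `lamEnergy`. -/
noncomputable def lamEnergyDensity (lam1 mu1 lam2 mu2 : ℝ) (v : (Fin 2 → ℝ) → (Fin 2 → ℝ))
    (x : Fin 2 → ℝ) : ℝ :=
  lamChi x * isoQ lam1 mu1 (e2e2 + jac v x) + (1 - lamChi x) * isoQ lam2 mu2 (e2e2 + jac v x)

variable {v : (Fin 2 → ℝ) → (Fin 2 → ℝ)} {K : ℝ≥0}

theorem integrableOn_lamEnergyDensity (lam1 mu1 lam2 mu2 : ℝ) (hv : LipschitzWith K v) :
    IntegrableOn (lamEnergyDensity lam1 mu1 lam2 mu2 v) unitCell := by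
  have hQ (lam mu : ℝ) : IntegrableOn (fun x => isoQ lam mu (e2e2 + jac v x)) unitCell :=
    integrableOn_unitCell_comp_jac hv ((continuous_isoQ lam mu).comp (continuous_const_add e2e2))
  refine ((hQ lam1 mu1).bdd_mul (c := 1) measurable_lamChi.aestronglyMeasurable ?_).add
    ((hQ lam2 mu2).bdd_mul (c := 1) (measurable_lamChi.const_sub 1).aestronglyMeasurable ?_) <;>
  refine ae_of_all _ fun x => ?_ <;>
  rcases lamChi_eq_one_or_zero x with h | h <;> simp [h]

theorem det_e2e2 : e2e2.det = 0 := by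
  simp [Matrix.det_fin_two, e2e2]

theorem neg_four_mul_det_le_lamEnergyDensity {lam1 mu1 lam2 mu2 c : ℝ} (hc : 0 ≤ c)
    (hmu1 : c ≤ mu1) (hsum1 : 0 ≤ lam1 + mu1 + c) (hmu2 : c ≤ mu2) (hsum2 : 0 ≤ lam2 + mu2 + c)
    (v : (Fin 2 → ℝ) → (Fin 2 → ℝ)) (x : Fin 2 → ℝ) :
    -(4 * c) * (e2e2 + jac v x).det ≤ lamEnergyDensity lam1 mu1 lam2 mu2 v x := by
  have hQ1 := neg_four_mul_det_le_isoQ hc hmu1 hsum1 (e2e2 + jac v x)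
  have hQ2 := neg_four_mul_det_le_isoQ hc hmu2 hsum2 (e2e2 + jac v x)
  rcases lamChi_eq_one_or_zero x with h | h
  · simpa only [lamEnergyDensity, h, one_mul, sub_self, zero_mul, add_zero] using hQ1
  · simpa only [lamEnergyDensity, h, zero_mul, sub_zero, one_mul, zero_add] using hQ2

theorem integral_unitCell_mul_det_e2e2_add_jac (hv : LipschitzWith K v) (hp : ZsqPeriodic v)
    (c : ℝ) : ∫ x in unitCell, c * (e2e2 + jac v x).det = 0 := by
  rw [integral_const_mul, integral_unitCell_det_add_jac hv hp, det_e2e2, mul_zero]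

theorem lamEnergy_nonneg {lam1 mu1 lam2 mu2 c : ℝ} (hc : 0 ≤ c) (hmu1 : c ≤ mu1)
    (hsum1 : 0 ≤ lam1 + mu1 + c) (hmu2 : c ≤ mu2) (hsum2 : 0 ≤ lam2 + mu2 + c)
    (hv : LipschitzWith K v) (hp : ZsqPeriodic v) : 0 ≤ lamEnergy lam1 mu1 lam2 mu2 v := by
  have hdet : IntegrableOn (fun x => -(4 * c) * (e2e2 + jac v x).det) unitCell :=
    integrableOn_unitCell_comp_jac hv (Φ := fun A => -(4 * c) * (e2e2 + A).det) (by fun_prop)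
  calc 0 = ∫ x in unitCell, -(4 * c) * (e2e2 + jac v x).det :=
        (integral_unitCell_mul_det_e2e2_add_jac hv hp _).symm
    _ ≤ lamEnergy lam1 mu1 lam2 mu2 v :=
        integral_mono hdet (integrableOn_lamEnergyDensity lam1 mu1 lam2 mu2 hv)
          (neg_four_mul_det_le_lamEnergyDensity hc hmu1 hsum1 hmu2 hsum2 v)

end Energy

section Sawtooth

theorem hasDerivAt_norm_unitAddCircle {t : ℝ} {n : ℤ} (hne : t ≠ n) (hlt : |t - n| < 1 / 2) :
    HasDerivAt (fun s : ℝ => ‖(s : UnitAddCircle)‖) (SignType.sign (t - n)) t := by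
  refine ((hasDerivAt_abs (sub_ne_zero.2 hne)).comp_sub_const t n).congr_of_eventuallyEq ?_
  have hcont : Continuous fun s : ℝ => |s - n| := by fun_prop
  filter_upwards [hcont.continuousAt.eventually_lt continuousAt_const hlt] with s hs
  have hcoe : ((s - n : ℝ) : UnitAddCircle) = s := by
    simp
  rw [← hcoe, AddCircle.norm_coe_eq_abs_iff 1 one_ne_zero, abs_one]
  exact hs.le

theorem lipschitzWith_norm_unitAddCircle : LipschitzWith 1 fun s : ℝ => ‖(s : UnitAddCircle)‖ := by
  have hcoe : LipschitzWith 1 fun s : ℝ => (s : UnitAddCircle) := .mk_one fun s t => by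
    rw [dist_eq_norm, dist_eq_norm, ← AddCircle.coe_sub]
    exact QuotientAddGroup.norm_mk_le_norm
  exact (lipschitzWith_one_norm.comp hcoe).weaken (one_mul 1).le

/-- A competitor for the cell problem whose only non-constant component is a sawtooth in the
direction of lamination, with slope `-1` in phase 1 and slope `1` in phase 2. -/
noncomputable def sawtooth (x : Fin 2 → ℝ) : Fin 2 → ℝ :=
  ![-‖(x 0 : UnitAddCircle)‖, 0]

theorem lipschitzWith_sawtooth : LipschitzWith 1 sawtooth := by
  have hcoord : LipschitzWith 1 fun x : Fin 2 → ℝ => -‖(x 0 : UnitAddCircle)‖ := by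
    have heval : LipschitzWith 1 fun x : Fin 2 → ℝ => x 0 := LipschitzWith.eval 0
    exact ((lipschitzWith_norm_unitAddCircle.comp heval).weaken (one_mul 1).le).neg
  refine LipschitzWith.of_dist_le_mul fun x y => ?_
  rw [dist_pi_le_iff (by positivity), Fin.forall_fin_two]
  exact ⟨hcoord.dist_le_mul x y, by simp [sawtooth]⟩

theorem zsqPeriodic_sawtooth : ZsqPeriodic sawtooth := by
  intro x z
  simp [sawtooth]

theorem hasDerivAt_norm_unitAddCircle_of_mem_unitCell {x : Fin 2 → ℝ} (hx : x ∈ unitCell)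
    (hzero : x 0 ≠ 0) (hhalf : x 0 ≠ 1 / 2) :
    HasDerivAt (fun s : ℝ => ‖(s : UnitAddCircle)‖) (2 * lamChi x - 1) (x 0) := by
  have hx0 : x 0 ∈ Set.Ico 0 1 := hx 0 trivial
  have hpos : 0 < x 0 := lt_of_le_of_ne hx0.1 hzero.symm
  rw [lamChi, Int.fract_eq_self.2 hx0]
  rcases lt_or_gt_of_ne hhalf with hlt | hgt
  · have hd := hasDerivAt_norm_unitAddCircle (t := x 0) (n := 0) (by simpa using hzero)
      (by simpa [abs_of_pos hpos] using hlt)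
    convert hd using 1
    rw [if_pos hlt, Int.cast_zero, sub_zero, sign_pos hpos]
    norm_num
  · have hd := hasDerivAt_norm_unitAddCircle (t := x 0) (n := 1) (by simpa using hx0.2.ne)
      (by rw [Int.cast_one, abs_of_neg (by linarith [hx0.2])]; linarith)
    convert hd using 1
    rw [if_neg hgt.not_gt, Int.cast_one, sign_neg (sub_neg.2 hx0.2)]
    norm_num

theorem ae_jac_sawtooth :
    ∀ᵐ x ∂(volume.restrict unitCell), jac sawtooth x = !![1 - 2 * lamChi x, 0; 0, 0] := by
  have hne (c : ℝ) : ∀ᵐ x : Fin 2 → ℝ, x 0 ≠ c :=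
    Measure.ae_eval_ne (μ := fun _ : Fin 2 => (volume : Measure ℝ)) 0 c
  filter_upwards [ae_restrict_of_ae (hne 0), ae_restrict_of_ae (hne (1 / 2)),
    ae_restrict_mem measurableSet_unitCell] with x hzero hhalf hx
  have hfst : HasFDerivAt (fun y : Fin 2 → ℝ => -‖(y 0 : UnitAddCircle)‖)
      ((1 - 2 * lamChi x) • ContinuousLinearMap.proj (R := ℝ) 0) x := by
    have hneg : HasDerivAt (fun s : ℝ => -‖(s : UnitAddCircle)‖) (1 - 2 * lamChi x) (x 0) := by
      rw [← neg_sub]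
      exact (hasDerivAt_norm_unitAddCircle_of_mem_unitCell hx hzero hhalf).neg
    exact hneg.comp_hasFDerivAt (f := fun y : Fin 2 → ℝ => y 0) x (hasFDerivAt_apply 0 x)
  have hsaw : HasFDerivAt sawtooth (ContinuousLinearMap.pi (R := ℝ) (φ := fun _ : Fin 2 => ℝ)
      ![(1 - 2 * lamChi x) • ContinuousLinearMap.proj 0, 0]) x := by
    rw [hasFDerivAt_pi', Fin.forall_fin_two]
    exact ⟨hfst, hasFDerivAt_const (0 : ℝ) x⟩
  ext i j
  fin_cases i <;> fin_cases j <;> simp [jac, hsaw.fderiv]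

theorem ae_lamEnergyDensity_sawtooth (lam1 : ℝ) {mu1 lam2 mu2 : ℝ} (h : mu1 = -(lam2 + mu2)) :
    ∀ᵐ x ∂(volume.restrict unitCell), lamEnergyDensity lam1 mu1 lam2 mu2 sawtooth x =
      -(4 * mu1) * (e2e2 + jac sawtooth x).det := by
  filter_upwards [ae_jac_sawtooth] with x hx
  have hgrad : e2e2 + jac sawtooth x = !![1 - 2 * lamChi x, 0; 0, 1] := by
    rw [hx]
    ext i j
    fin_cases i <;> fin_cases j <;> simp [e2e2]
  have hQ (lam mu a : ℝ) :
      isoQ lam mu !![a, 0; 0, 1] = (lam + 2 * mu) * (a ^ 2 + 1) + 2 * lam * a := by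
    simp [isoQ]
  rw [lamEnergyDensity, hgrad, hQ, hQ, Matrix.det_fin_two_of, h]
  rcases lamChi_eq_one_or_zero x with hchi | hchi <;> rw [hchi] <;> ring

theorem lamEnergy_sawtooth (lam1 : ℝ) {mu1 lam2 mu2 : ℝ} (h : mu1 = -(lam2 + mu2)) :
    lamEnergy lam1 mu1 lam2 mu2 sawtooth = 0 :=
  (integral_congr_ae (ae_lamEnergyDensity_sawtooth lam1 h)).trans
    (integral_unitCell_mul_det_e2e2_add_jac lipschitzWith_sawtooth zsqPeriodic_sawtooth _)

end Sawtooth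

theorem stmt_11_general (lam1 mu1 lam2 mu2 : ℝ)
    (h1 : 0 ≤ mu1) (h2 : mu1 = -(lam2 + mu2)) (h3 : mu1 ≤ mu2)
    (h4 : 0 ≤ lam1 + 2 * mu1) :
    (∀ (v : (Fin 2 → ℝ) → (Fin 2 → ℝ)) (K : NNReal),
      LipschitzWith K v → ZsqPeriodic v → 0 ≤ lamEnergy lam1 mu1 lam2 mu2 v) ∧
    (∃ (v : (Fin 2 → ℝ) → (Fin 2 → ℝ)) (K : NNReal),
      LipschitzWith K v ∧ ZsqPeriodic v ∧ lamEnergy lam1 mu1 lam2 mu2 v = 0) :=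
  ⟨fun _ _ => lamEnergy_nonneg h1 le_rfl (by linarith) h3 (by linarith),
    sawtooth, 1, lipschitzWith_sawtooth, zsqPeriodic_sawtooth, lamEnergy_sawtooth lam1 h2⟩

theorem stmt_11 (lam1 mu1 lam2 mu2 : ℝ)
    (h1 : 0 < mu1) (h2 : mu1 = -(lam2 + mu2)) (h3 : mu1 < mu2)
    (h4 : 0 < lam1 + mu1) :
    (∀ (v : (Fin 2 → ℝ) → (Fin 2 → ℝ)) (K : NNReal),
      LipschitzWith K v → ZsqPeriodic v → 0 ≤ lamEnergy lam1 mu1 lam2 mu2 v) ∧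
    (∃ (v : (Fin 2 → ℝ) → (Fin 2 → ℝ)) (K : NNReal),
      LipschitzWith K v ∧ ZsqPeriodic v ∧ lamEnergy lam1 mu1 lam2 mu2 v = 0) :=
  stmt_11_general lam1 mu1 lam2 mu2 h1.le h2 h3.le (by linarith)
end
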